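/- arXiv:2203.10293 — 3 statements merged into one kernel-verified Lean document; each statement's English description precedes it below -/
import Mathlib

section
/- Let n ≥ 1, let X ⊆ ℕ be infinite with e = min X, let p, q ∈ [2n]^n, let x, y ∈ [X⁻]^n with x →_{pq} y, let i < n with x_[i] ∉ y, and let a = max(x_[i] ∩ (x ∪ y)⁺) be the largest element of (x ∪ y) ∪ {e} strictly below x_[i]. Then for every x' ∈ X with a < x' ≤ x_[i] and ρ(a, x') ≥ 2n, one has (x ∖ {x_[i]}) ∪ {x'} →_{pq} y. -/
/-! Common definitions. -/

/-- The `i`-th smallest element of a finite set of naturals (default 0 if `i ≥ |s|`). -/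
def nth (s : Finset ℕ) (i : ℕ) : ℕ := (s.sort (· ≤ ·)).getD i 0

/-- `[ω]^n` : the set of `n`-element subsets of `ℕ` (as `Finset`s). -/
def cube (n : ℕ) : Set (Finset ℕ) := {s | s.card = n}

/-- `P` is a partition of `Z` (one member may be empty). -/
def IsPartitionOn (Z : Set (Finset ℕ)) (P : Set (Set (Finset ℕ))) : Prop :=
  ⋃₀ P = Z ∧ ∀ A ∈ P, ∀ B ∈ P, A ∩ B = ∅ ∨ A = B

/-- The equivalence relation `≈_P` induced by a partition `P`. -/
def EquivP (P : Set (Set (Finset ℕ))) (p q : Finset ℕ) : Prop := ∃ A ∈ P, p ∈ A ∧ q ∈ A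

/-- `X` is `I`-canonical for a partition `P` of `[ω]^n`. -/
def ICanon (n : ℕ) (P : Set (Set (Finset ℕ))) (I : Set ℕ) (X : Set ℕ) : Prop :=
  ∀ p q : Finset ℕ, ↑p ⊆ X → p.card = n → ↑q ⊆ X → q.card = n →
    (EquivP P p q ↔ ∀ i ∈ I, nth p i = nth q i)

/-- `X` is canonical for a partition `P` of `[ω]^n`. -/
def Canon (n : ℕ) (P : Set (Set (Finset ℕ))) (X : Set ℕ) : Prop :=
  ∃ I : Set ℕ, I ⊆ Set.Iio n ∧ ICanon n P I X

/-- `X` is homogeneous for a partition `P` of `[ω]^n`. -/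
def Homog (n : ℕ) (P : Set (Set (Finset ℕ))) (X : Set ℕ) : Prop :=
  ∃ A ∈ P, ∀ s : Finset ℕ, ↑s ⊆ X → s.card = n → s ∈ A

/-- `[2n]^n` : the `n`-element subsets of `{0, …, 2n-1}`. -/
def idx (n : ℕ) : Finset (Finset ℕ) := Finset.powersetCard n (Finset.range (2 * n))

/-- The set `Q_{pq} = { z ∈ [ω]^{2n} : {z_[i] : i ∈ p} ≈_P {z_[i] : i ∈ q} }`. -/
def Qpq (n : ℕ) (P : Set (Set (Finset ℕ))) (p q : Finset ℕ) : Set (Finset ℕ) :=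
  {z | z.card = 2 * n ∧ EquivP P (p.image (nth z)) (q.image (nth z))}

/-- `P*` : the atoms of the field of subsets of `[ω]^{2n}` generated by the sets `Q_{pq}`. -/
def Atoms (n : ℕ) (P : Set (Set (Finset ℕ))) : Set (Set (Finset ℕ)) :=
  {Q | Q.Nonempty ∧ ∃ S : Finset ℕ → Finset ℕ → Set (Finset ℕ),
    (∀ p ∈ idx n, ∀ q ∈ idx n, S p q = Qpq n P p q ∨ S p q = cube (2 * n) \ Qpq n P p q) ∧
    Q = ⋂ p ∈ idx n, ⋂ q ∈ idx n, S p q}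

/-- `I_{pq} = { i < n : p_[i] = q_[i] }`. -/
def Ipq (n : ℕ) (p q : Finset ℕ) : Set ℕ := {i | i < n ∧ nth p i = nth q i}

/-- `I(Q) = ⋂ { I_{pq} : p, q ∈ [2n]^n, Q ⊆ Q_{pq} }`. -/
def IofQ (n : ℕ) (P : Set (Set (Finset ℕ))) (Q : Set (Finset ℕ)) : Set ℕ :=
  ⋂ p ∈ idx n, ⋂ q ∈ idx n, ⋂ (_ : Q ⊆ Qpq n P p q), Ipq n p q

/-- `ρ(a,b) = |(a △ b) ∩ X|`, identifying `a` with `{0, …, a-1}`. -/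
noncomputable def rho (X : Set ℕ) (a b : ℕ) : ℕ := (X ∩ Set.Ico (min a b) (max a b)).ncard

/-- The sparsity `d(x) = min { ρ(a,b) : a, b ∈ x ∪ {e}, a ≠ b }` (with `d(∅) = ⊤ = ω`). -/
noncomputable def sparsity (X : Set ℕ) (e : ℕ) (x : Finset ℕ) : ℕ∞ :=
  ⨅ a ∈ (x ∪ {e} : Finset ℕ), ⨅ b ∈ (x ∪ {e} : Finset ℕ), ⨅ _ : a ≠ b, (rho X a b : ℕ∞)

/-- `r(x,y) = max_{b ∈ y} min { ρ(a,b) : a ∈ x ∪ {e}, a ≤ b }`. -/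
noncomputable def rfun (X : Set ℕ) (e : ℕ) (x y : Finset ℕ) : ℕ :=
  y.sup fun b => sInf ((fun a => rho X a b) '' {a : ℕ | a ∈ (x ∪ {e} : Finset ℕ) ∧ a ≤ b})

/-- `x →_{pq} y` : there is `z ∈ [X]^{2n}` with `{z_[i] : i ∈ p} = x` and `{z_[i] : i ∈ q} = y`. -/
def Arrow (X : Set ℕ) (n : ℕ) (p q x y : Finset ℕ) : Prop :=
  ∃ z : Finset ℕ, ↑z ⊆ X ∧ z.card = 2 * n ∧ p.image (nth z) = x ∧ q.image (nth z) = y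

/-- `x ↔_Q y` : `x →_{pq} y` for some `p, q ∈ [2n]^n` with `Q ⊆ Q_{pq}`. -/
def RelQ (n : ℕ) (P : Set (Set (Finset ℕ))) (Q : Set (Finset ℕ)) (X : Set ℕ)
    (x y : Finset ℕ) : Prop :=
  ∃ p ∈ idx n, ∃ q ∈ idx n, Q ⊆ Qpq n P p q ∧ Arrow X n p q x y

/-- `x_0, …, x_l` is a `t`-cascade. -/
def IsCascade (n : ℕ) (P : Set (Set (Finset ℕ))) (Q : Set (Finset ℕ)) (X : Set ℕ) (e : ℕ)
    (t l : ℕ) (x : ℕ → Finset ℕ) : Prop :=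
  (∀ i ≤ l, ↑(x i) ⊆ X \ {e} ∧ (x i).card = n) ∧
  ∀ i < l, ((n ^ (t - 2 * i) : ℕ) : ℕ∞) ≤ sparsity X e (x i) ∧
    rfun X e (x i) (x (i + 1)) ≤ n ^ (t - 2 * i - 1) ∧
    RelQ n P Q X (x i) (x (i + 1))

/-- The `n`-fold Fubini power `u ⊗ ⋯ ⊗ u` of an ultrafilter on `ℕ`, as an
ultrafilter on `Fin n → ℕ`. -/
noncomputable def tensorPow (u : Ultrafilter ℕ) : (n : ℕ) → Ultrafilter (Fin n → ℕ)
  | 0 => pure (fun i => i.elim0)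
  | n + 1 => u.bind fun a => (tensorPow u n).map (Fin.cons a)

/-- The diagonal ultrafilter extension `f̃(u, u, …, u)` of `f : ℕ^n → ℕ`. -/
noncomputable def diagExt {n : ℕ} (f : (Fin n → ℕ) → ℕ) (u : Ultrafilter ℕ) : Ultrafilter ℕ :=
  (tensorPow u n).map f

/-- The Rudin–Keisler preorder. -/
def RKle (u v : Ultrafilter ℕ) : Prop := ∃ h : ℕ → ℕ, v.map h = u

/-- Rudin–Keisler equivalence. -/
def RKeq (u v : Ultrafilter ℕ) : Prop := RKle u v ∧ RKle v u

/-- `u` is nonprincipal: it contains no finite set. -/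
def Nonprincipal (u : Ultrafilter ℕ) : Prop := ∀ S : Set ℕ, S.Finite → S ∉ u

/-- `u` is a Ramsey ultrafilter. -/
def IsRamseyU (u : Ultrafilter ℕ) : Prop :=
  Nonprincipal u ∧ ∀ n : ℕ, 1 ≤ n → ∀ P : Set (Set (Finset ℕ)),
    IsPartitionOn (cube n) P → P.Finite → ∃ X ∈ u, Homog n P X

/-- `f : ℕ^n → ℕ` is selectively upward injective on `X` w.r.t. the index set `I`
(`I = ∅` gives "upward constant"). -/
def SelUpInjWrt (n : ℕ) (f : (Fin n → ℕ) → ℕ) (X : Set ℕ) (I : Set (Fin n)) : Prop :=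
  ∀ x y : Fin n → ℕ, (∀ i, x i ∈ X) → (∀ i, y i ∈ X) → StrictMono x → StrictMono y →
    (f x = f y ↔ ∀ i ∈ I, x i = y i)

/-! Let `z` witness `x →_{pq} y`, and put `w = x_[i]`. Compress the elements of `z` in `(a, w]`
into `(a, x']`: send `w` to `x'` and the others, fewer than `2n` in number, increasingly into
`X ∩ (a, x')`. This map is strictly increasing on `z`, hence commutes with taking the `i`-th
smallest element, and among the elements of `x ∪ y` it moves only `w`. -/

theorem image_eq_insert_erase {α : Type*} [DecidableEq α] {f : α → α} {s : Finset α} {a : α}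
    (ha : a ∈ s) (hf : ∀ b ∈ s, b ≠ a → f b = b) : s.image f = insert (f a) (s.erase a) := by
  have herase : (s.erase a).image f = s.erase a :=
    (Finset.image_congr fun b hb => hf b (Finset.mem_of_mem_erase hb)
      (Finset.ne_of_mem_erase hb)).trans Finset.image_id
  calc s.image f = (insert a (s.erase a)).image f := by rw [Finset.insert_erase ha]
    _ = insert (f a) (s.erase a) := by rw [Finset.image_insert, herase]

section LinearOrder

variable {α β : Type*} [LinearOrder α] [LinearOrder β]

theorem sort_image_of_strictMonoOn {f : α → β} {s : Finset α} (hf : StrictMonoOn f s) :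
    (s.image f).sort = s.sort.map f := by
  have hlt : (s.sort.map f).Pairwise (· < ·) :=
    List.pairwise_map.2 <| s.sortedLT_sort.pairwise.imp_of_mem fun hb hc hbc =>
      hf ((Finset.mem_sort _).1 hb) ((Finset.mem_sort _).1 hc) hbc
  have himage : s.image f = (s.sort.map f).toFinset := by
    ext
    simp only [Finset.mem_image, List.mem_toFinset, List.mem_map, Finset.mem_sort]
  rw [himage, (List.toFinset_sort _ (hlt.imp ne_of_lt)).2 (hlt.imp le_of_lt)]

theorem exists_strictMonoOn_mapsTo_of_card_le [Nonempty β] {s : Finset α} {t : Finset β}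
    (h : s.card ≤ t.card) : ∃ f : α → β, StrictMonoOn f s ∧ Set.MapsTo f s t := by
  let g : s → β := t.orderEmbOfCardLe h ∘ (s.orderIsoOfFin rfl).symm
  have hg : StrictMono g :=
    (t.orderEmbOfCardLe h).strictMono.comp (s.orderIsoOfFin rfl).symm.strictMono
  let f : α → β := Function.extend Subtype.val g fun _ => Classical.arbitrary β
  have hfg (b : s) : f b = g b := Subtype.val_injective.extend_apply _ _ b
  refine ⟨f, fun b hb c hc hbc => ?_, fun b hb => ?_⟩
  · rw [hfg ⟨b, hb⟩, hfg ⟨c, hc⟩]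
    exact hg hbc
  · rw [hfg ⟨b, hb⟩]
    exact t.orderEmbOfCardLe_mem h _

theorem exists_strictMonoOn_compress {z t : Finset α} {a c w : α} (hac : a < c) (hcw : c ≤ w)
    (ht : ∀ b ∈ t, b ∈ Set.Ioo a c) (hcard : (z.filter (· ∈ Set.Ioo a w)).card ≤ t.card) :
    ∃ f : α → α, StrictMonoOn f z ∧ f w = c ∧ (∀ b ∉ Set.Ioc a w, f b = b) ∧
      ∀ b ∈ z, b ∈ Set.Ioo a w → f b ∈ t := by
  have : Nonempty α := ⟨a⟩
  obtain ⟨g, hg_mono, hg_maps⟩ := exists_strictMonoOn_mapsTo_of_card_le hcard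
  have hg_mem {b : α} (hb : b ∈ z) (hab : a < b) (hbw : b < w) : g b ∈ t :=
    hg_maps (Finset.mem_filter.2 ⟨hb, hab, hbw⟩)
  have hg_lt {b b' : α} (hb : b ∈ z) (hb' : b' ∈ z) (hab : a < b) (hbb' : b < b') (hb'w : b' < w) :
      g b < g b' :=
    hg_mono (Finset.mem_filter.2 ⟨hb, hab, hbb'.trans hb'w⟩)
      (Finset.mem_filter.2 ⟨hb', hab.trans hbb', hb'w⟩) hbb'
  refine ⟨fun b => if b = w then c else if b ∈ Set.Ioo a w then g b else b, ?_, ?_, ?_, ?_⟩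
  · intro b hb b' hb' hbb'
    simp only [Set.mem_Ioo] at ht ⊢
    grind
  · simp
  · grind
  · grind

end LinearOrder

theorem nth_mem {s : Finset ℕ} {i : ℕ} (hi : i < s.card) : nth s i ∈ s := by
  have hlen : i < (s.sort (· ≤ ·)).length := by rwa [Finset.length_sort]
  rw [nth, List.getD_eq_getElem _ _ hlen]
  exact (Finset.mem_sort _).1 (List.getElem_mem hlen)

theorem nth_image_of_strictMonoOn {f : ℕ → ℕ} {s : Finset ℕ} (hf : StrictMonoOn f s) {i : ℕ}
    (hi : i < s.card) : nth (s.image f) i = f (nth s i) := by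
  have hlen : i < (s.sort (· ≤ ·)).length := by rwa [Finset.length_sort]
  simp only [nth, sort_image_of_strictMonoOn hf, List.getD_eq_getElem?_getD, List.getElem?_map,
    List.getElem?_eq_getElem hlen, Option.map_some, Option.getD_some]

theorem arrow_image_of_strictMonoOn {X : Set ℕ} {n : ℕ} {p q z : Finset ℕ} {f : ℕ → ℕ}
    (hp : p ⊆ Finset.range (2 * n)) (hq : q ⊆ Finset.range (2 * n)) (hz : z.card = 2 * n)
    (hf : StrictMonoOn f z) (hfX : Set.MapsTo f z X) :
    Arrow X n p q ((p.image (nth z)).image f) ((q.image (nth z)).image f) := by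
  have image_nth {r : Finset ℕ} (hr : r ⊆ Finset.range (2 * n)) :
      r.image (nth (z.image f)) = (r.image (nth z)).image f := by
    rw [Finset.image_image]
    exact Finset.image_congr fun m hm =>
      nth_image_of_strictMonoOn hf (hz ▸ Finset.mem_range.1 (hr hm))
  refine ⟨z.image f, ?_, ?_, image_nth hp, image_nth hq⟩
  · rw [Finset.coe_image]
    exact hfX.image_subset
  · rw [Finset.card_image_of_injOn hf.injOn, hz]

theorem rho_le_card_add_one {X : Set ℕ} {a b : ℕ} {t : Finset ℕ} (hab : a ≤ b)
    (ht : X ∩ Set.Ioo a b ⊆ t) : rho X a b ≤ t.card + 1 := by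
  have hsub : X ∩ Set.Ico a b ⊆ (insert a t : Finset ℕ) := by
    rintro m ⟨hmX, ham, hmb⟩
    rcases ham.eq_or_lt with rfl | ham
    · exact Finset.mem_insert_self a t
    · exact Finset.mem_insert_of_mem (ht ⟨hmX, ham, hmb⟩)
  calc rho X a b = (X ∩ Set.Ico a b).ncard := by rw [rho, min_eq_left hab, max_eq_right hab]
    _ ≤ (insert a t).card := by
      rw [← Set.ncard_coe_finset]
      exact Set.ncard_le_ncard hsub
    _ ≤ t.card + 1 := Finset.card_insert_le a t

theorem exists_strictMonoOn_mapsTo_of_card_le_rho {X : Set ℕ} {z : Finset ℕ} {a w x' : ℕ}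
    (hzX : ↑z ⊆ X) (hw : w ∈ z) (hx' : x' ∈ X) (hax' : a < x') (hx'w : x' ≤ w)
    (hρ : z.card ≤ rho X a x') :
    ∃ f : ℕ → ℕ, StrictMonoOn f z ∧ Set.MapsTo f z X ∧ f w = x' ∧ ∀ b ∉ Set.Ioc a w, f b = b := by
  have hfin : (X ∩ Set.Ioo a x').Finite := (Set.finite_Ioo a x').inter_of_right X
  have hsub : z.filter (· ∈ Set.Ioo a w) ⊆ z.erase w := fun b hb =>
    have ⟨hbz, _, hbw⟩ := Finset.mem_filter.1 hb
    Finset.mem_erase.2 ⟨hbw.ne, hbz⟩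
  have hcard : (z.filter (· ∈ Set.Ioo a w)).card ≤ hfin.toFinset.card := by
    have := Finset.card_le_card hsub
    have := Finset.card_erase_add_one hw
    have := rho_le_card_add_one hax'.le hfin.coe_toFinset.ge
    lia
  obtain ⟨f, hf, hfw, hf_id, hf_mem⟩ := exists_strictMonoOn_compress hax' hx'w
    (fun b hb => (hfin.mem_toFinset.1 hb).2) hcard
  refine ⟨f, hf, fun b hb => ?_, hfw, hf_id⟩
  by_cases hb_in : b ∈ Set.Ioc a w
  · obtain ⟨hab, hbw⟩ := hb_in
    rcases hbw.eq_or_lt with rfl | hbw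
    · rwa [hfw]
    · exact (hfin.mem_toFinset.1 (hf_mem b hb ⟨hab, hbw⟩)).1
  · rw [hf_id b hb_in]
    exact hzX hb

theorem stmt_13_general {X : Set ℕ} {n : ℕ} {p q x y : Finset ℕ} (hp : p ⊆ Finset.range (2 * n))
    (hq : q ⊆ Finset.range (2 * n)) (harr : Arrow X n p q x y) {w a x' : ℕ} (hwx : w ∈ x)
    (hwy : w ∉ y) (hmax : ∀ b ∈ x ∪ y, b < w → b ≤ a) (hx' : x' ∈ X) (hax' : a < x')
    (hx'w : x' ≤ w) (hρ : 2 * n ≤ rho X a x') : Arrow X n p q (insert x' (x.erase w)) y := by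
  obtain ⟨z, hzX, hz, rfl, rfl⟩ := harr
  have hwz : w ∈ z := by
    obtain ⟨k, hk, rfl⟩ := Finset.mem_image.1 hwx
    exact nth_mem (hz ▸ Finset.mem_range.1 (hp hk))
  obtain ⟨f, hf, hfX, rfl, hf_id⟩ :=
    exists_strictMonoOn_mapsTo_of_card_le_rho hzX hwz hx' hax' hx'w (hz.trans_le hρ)
  have hf_fix {b : ℕ} (hb : b ∈ p.image (nth z) ∪ q.image (nth z)) (hbw : b ≠ w) : f b = b :=
    hf_id b fun ⟨hab, hb_le⟩ => (hmax b hb (hb_le.lt_of_ne hbw)).not_gt hab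
  have himage_x : (p.image (nth z)).image f = insert (f w) ((p.image (nth z)).erase w) :=
    image_eq_insert_erase hwx fun b hb => hf_fix (Finset.mem_union_left _ hb)
  have himage_y : (q.image (nth z)).image f = q.image (nth z) :=
    (Finset.image_congr fun b hb =>
      hf_fix (Finset.mem_union_right _ hb) (ne_of_mem_of_not_mem hb hwy)).trans Finset.image_id
  have harr := arrow_image_of_strictMonoOn hp hq hz hf hfX
  rwa [himage_x, himage_y] at harr

/-- let `x →_{pq} y` with `x, y ∈ [X⁻]^n`, `i < n`, `x_[i] ∉ y`, and let
`a = max(x_[i] ∩ (x ∪ y)⁺)` be the largest element of `(x ∪ y) ∪ {e}` strictly below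
`x_[i]`. Then for every `x' ∈ X` with `a < x' ≤ x_[i]` and `ρ(a, x') ≥ 2n`:
`(x ∖ {x_[i]}) ∪ {x'} →_{pq} y`. -/
theorem stmt_13 (n : ℕ) (hn : 1 ≤ n) (X : Set ℕ) (hX : X.Infinite) (e : ℕ) (he : e = sInf X)
    (p q : Finset ℕ) (hp : p ∈ idx n) (hq : q ∈ idx n)
    (x y : Finset ℕ) (hx : ↑x ⊆ X \ {e}) (hxc : x.card = n)
    (hy : ↑y ⊆ X \ {e}) (hyc : y.card = n)
    (harr : Arrow X n p q x y) (i : ℕ) (hi : i < n) (hni : nth x i ∉ y)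
    (a : ℕ) (haMem : a ∈ x ∪ y ∪ ({e} : Finset ℕ)) (haLt : a < nth x i)
    (haMax : ∀ b ∈ x ∪ y ∪ ({e} : Finset ℕ), b < nth x i → b ≤ a)
    (x' : ℕ) (hx' : x' ∈ X) (h1 : a < x') (h2 : x' ≤ nth x i) (h3 : 2 * n ≤ rho X a x') :
    Arrow X n p q (x.erase (nth x i) ∪ {x'}) y := by
  rw [Finset.union_singleton]
  exact stmt_13_general (Finset.mem_powersetCard.1 hp).1 (Finset.mem_powersetCard.1 hq).1 harr
    (nth_mem (hxc ▸ hi)) hni (fun b hb => haMax b (Finset.mem_union_left _ hb)) hx' h1 h2 h3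
end

section
/- Let n ≥ 2, let P be a partition of [ω]^n, let Q ∈ P*, let X ⊆ ℕ be infinite with [X]^{2n} ⊆ Q and e = min X, and let m = n^{n·B·(B−1)} where B = binomial(2n,n). Let x ∈ [X⁻]^n, let i < n with i ∉ I(Q), let x' ∈ X, and set y = (x ∖ {x_[i]}) ∪ {x'}. Suppose min(d(x), d(y)) ≥ m and either (i ≥ 1 and x_[i−1] < x' ≤ x_[i]) or (i = 0 and e < x' ≤ x_[0]). Then x ↔_Q y. -/
/-!
All the relations between finite sets involved here depend on relative position only: whether
`Q ⊆ Q_{pq}` is decided by the order type of the pair `(p, q)`, and since `[X]^{2n} ⊆ Q` the same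
order type decides whether `x ≈_P y` for `x, y ∈ [X]^n`. The relation therefore makes sense for
`n`-element sets of rationals, where it is an equivalence invariant under order embeddings.

Suppose it relates two tuples `p, q` of rationals with `p i ≠ q i`, and let `u` be any tuple. Moving
`p` to `u` gives an order embedding `φ` with `u ∼ φ u` and `φ (u i) ≠ u i`. Some iterate
`w = φ^[N] u ∼ u` avoids the point `u i`, because the iterates of `u i` under `φ` are distinct. Now
`u i` can be moved slightly with `w` and the other entries of `u` held fixed, which does not affect
the equivalence with `w`; by invariance it can then be moved anywhere between its neighbours in `u`.
-/

section OrderEmbeddings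

variable {K : Type*} [Field K] [LinearOrder K] [IsStrictOrderedRing K] {n : ℕ}

theorem exists_strictMono_eqOn_Iic {f : K → K} (hf : StrictMono f) {a b c : K} (hab : a < b)
    (hc : f a < c) : ∃ g : K → K, StrictMono g ∧ Set.EqOn g f (Set.Iic a) ∧ g b = c := by
  let line (s : K) : K := f a + (s - a) * ((c - f a) / (b - a))
  have hslope : 0 < (c - f a) / (b - a) := div_pos (sub_pos.2 hc) (sub_pos.2 hab)
  have hline : StrictMono line := fun s t hst ↦
    add_lt_add_right (mul_lt_mul_of_pos_right (sub_lt_sub_right hst a) hslope) (f a)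
  let g (s : K) : K := if s ≤ a then f s else line s
  have hgf : Set.EqOn g f (Set.Iic a) := fun s hs ↦ if_pos hs
  have hgline : Set.EqOn g line (Set.Ici a) := by
    intro s hs
    rcases (Set.mem_Ici.1 hs).eq_or_lt with rfl | has
    · simp [g, line]
    · exact if_neg has.not_ge
  refine ⟨g, ((hf.strictMonoOn _).congr hgf.symm).Iic_union_Ici
    ((hline.strictMonoOn _).congr hgline.symm), hgf, ?_⟩
  rw [hgline hab.le]
  simp only [line]
  rw [mul_div_cancel₀ _ (sub_pos.2 hab).ne', add_sub_cancel]

theorem exists_strictMono_eqOn_finset (S : Finset K) {f : K → K} (hf : StrictMonoOn f S) :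
    ∃ g : K → K, StrictMono g ∧ Set.EqOn g f S := by
  induction S using Finset.induction_on_max with
  | empty => exact ⟨id, strictMono_id, by simp⟩
  | insert t S ht ih =>
    obtain ⟨g, hg, hgf⟩ := ih (hf.mono (by simp))
    rcases S.eq_empty_or_nonempty with rfl | hS
    · exact ⟨fun s ↦ s + (f t - t), add_left_strictMono, by simp⟩
    · have hmax := S.max'_mem hS
      obtain ⟨g', hg', hg'g, hg't⟩ := exists_strictMono_eqOn_Iic hg (ht _ hmax) (c := f t)
        ((hgf hmax).trans_lt (hf (by simp [hmax]) (by simp) (ht _ hmax)))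
      refine ⟨g', hg', fun s hs ↦ ?_⟩
      rcases Finset.mem_insert.1 hs with rfl | hs
      · exact hg't
      · exact (hg'g (S.le_max' s hs)).trans (hgf hs)

theorem exists_orderEmbedding_trans_eq (u v : Fin n ↪o K) : ∃ φ : K ↪o K, u.trans φ = v := by
  have hf : StrictMonoOn (Function.extend u v 0) (Finset.univ.image u : Finset K) := by
    simp only [StrictMonoOn, Finset.coe_image, Finset.coe_univ, Set.image_univ,
      Set.forall_mem_range, u.injective.extend_apply, u.lt_iff_lt, v.lt_iff_lt, imp_self,
      implies_true]
  obtain ⟨g, hg, hgf⟩ := exists_strictMono_eqOn_finset _ hf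
  refine ⟨OrderEmbedding.ofStrictMono g hg, RelEmbedding.ext fun k ↦ ?_⟩
  exact (hgf (by simp)).trans (u.injective.extend_apply v 0 k)

theorem exists_orderEmbedding_move (S : Finset K) {a b : K} (hab : a < b)
    (hS : ∀ s ∈ S, s < a ∨ b < s) : ∃ φ : K ↪o K, (∀ s ∈ S, φ s = s) ∧ φ a = b := by
  have hf : StrictMonoOn (Function.update id a b) (insert a S : Finset K) := by
    intro s hs t ht hst
    simp only [Finset.coe_insert, Set.mem_insert_iff, Finset.mem_coe] at hs ht
    simp only [Function.update_apply, id]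
    grind
  obtain ⟨g, hg, hgf⟩ := exists_strictMono_eqOn_finset _ hf
  refine ⟨OrderEmbedding.ofStrictMono g hg, fun s hs ↦ ?_, ?_⟩
  · have hsa : s ≠ a := by grind
    exact (hgf (by simp [hs])).trans (Function.update_of_ne hsa _ _)
  · exact (hgf (by simp)).trans (Function.update_self _ _ _)

end OrderEmbeddings

theorem iterate_injective_of_strictMono {α : Type*} [LinearOrder α] {f : α → α} (hf : StrictMono f)
    {a : α} (ha : f a ≠ a) : Function.Injective fun N ↦ f^[N] a := by
  rcases ha.lt_or_gt with h | h
  · exact (hf.strictAnti_iterate_of_map_lt h).injective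
  · exact (hf.strictMono_iterate_of_lt_map h).injective

theorem exists_forall_iterate_ne {α ι : Type*} [LinearOrder α] [Finite ι] {f : α → α}
    (hf : StrictMono f) {a : α} (ha : f a ≠ a) (u : ι → α) : ∃ N, ∀ k, f^[N] (u k) ≠ a := by
  by_contra! h
  choose κ hκ using h
  obtain ⟨M, N, hMN, hκMN⟩ : ∃ M N, M < N ∧ κ M = κ N := by
    obtain ⟨M, N, hne, heq⟩ := Finite.exists_ne_map_eq_of_infinite κ
    rcases hne.lt_or_gt with hlt | hlt
    exacts [⟨M, N, hlt, heq⟩, ⟨N, M, hlt, heq.symm⟩]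
  have hfix : f^[N - M] a = f^[0] a := by
    calc f^[N - M] a = f^[N - M] (f^[M] (u (κ M))) := by rw [hκ]
      _ = f^[N] (u (κ N)) := by rw [← Function.iterate_add_apply, Nat.sub_add_cancel hMN.le, hκMN]
      _ = f^[0] a := hκ N
  exact (Nat.sub_pos_of_lt hMN).ne' (iterate_injective_of_strictMono hf ha hfix)

section InvariantEquivalence

variable {n : ℕ}

/-- An equivalence relation on strictly increasing `n`-tuples of elements of `α` that is preserved
by all order embeddings of `α` into itself. -/
structure IsInvariantEquiv {α : Type*} [LinearOrder α] (r : (Fin n ↪o α) → (Fin n ↪o α) → Prop) :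
    Prop extends Equivalence r where
  map : ∀ (φ : α ↪o α) {u v}, r u v → r (u.trans φ) (v.trans φ)

namespace IsInvariantEquiv

theorem exists_rel_iterate {α : Type*} [LinearOrder α] {r : (Fin n ↪o α) → (Fin n ↪o α) → Prop}
    (hr : IsInvariantEquiv r) {u : Fin n ↪o α} {φ : α ↪o α} (hφ : r u (u.trans φ)) (N : ℕ) :
    ∃ w, r u w ∧ ∀ k, w k = φ^[N] (u k) := by
  induction N with
  | zero => exact ⟨u, hr.refl u, fun _ ↦ rfl⟩
  | succ N ih =>
    obtain ⟨w, huw, hw⟩ := ih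
    refine ⟨w.trans φ, hr.trans hφ (hr.map φ huw), fun k ↦ ?_⟩
    rw [Function.iterate_succ_apply', ← hw]
    rfl

variable {K : Type*} [Field K] [LinearOrder K] [IsStrictOrderedRing K]
  {r : (Fin n ↪o K) → (Fin n ↪o K) → Prop}

theorem exists_rel_forall_ne (hr : IsInvariantEquiv r) {p q : Fin n ↪o K} (hpq : r p q) {i : Fin n}
    (hi : p i ≠ q i) (u : Fin n ↪o K) : ∃ w, r u w ∧ ∀ k, w k ≠ u i := by
  obtain ⟨θ, rfl⟩ := exists_orderEmbedding_trans_eq p u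
  obtain ⟨φ, hφ⟩ := exists_orderEmbedding_trans_eq (p.trans θ) (q.trans θ)
  have hmove : φ (p.trans θ i) ≠ p.trans θ i := by
    change (p.trans θ).trans φ i ≠ p.trans θ i
    rw [hφ]
    exact fun h ↦ hi (θ.injective h).symm
  obtain ⟨N, hN⟩ := exists_forall_iterate_ne φ.strictMono hmove (p.trans θ)
  obtain ⟨w, huw, hw⟩ := hr.exists_rel_iterate (hφ ▸ hr.map θ hpq) N
  exact ⟨w, huw, fun k ↦ hw k ▸ hN k⟩

theorem rel_of_lt_of_forall_ne (hr : IsInvariantEquiv r) {u v w : Fin n ↪o K} {i : Fin n}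
    (huw : r u w) (hw : ∀ k, w k ≠ u i) (huv : ∀ k ≠ i, u k = v k) (hi : u i < v i) :
    r u v := by
  let S : Finset K := (Finset.univ.image u ∪ Finset.univ.image w).erase (u i)
  have hSu : ∀ k ≠ i, u k ∈ S := fun k hk ↦ by simp [S, hk]
  have hSw : ∀ k, w k ∈ S := fun k ↦ by simp [S, hw k]
  obtain ⟨m, hum, hm⟩ := Order.exists_between_finsets {u i}
    (insert (v i) {s ∈ S | u i < s}) (by simp [hi])
  simp only [Finset.mem_singleton, forall_eq, Finset.mem_insert, Finset.mem_filter,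
    forall_eq_or_imp] at hum hm
  obtain ⟨ψ, hψS, hψ⟩ := exists_orderEmbedding_move S hum fun s hs ↦
    (Finset.ne_of_mem_erase hs).lt_or_gt.imp_right fun h ↦ hm.2 s ⟨hs, h⟩
  obtain ⟨θ, hθu, hθ⟩ := exists_orderEmbedding_move (Finset.univ.image u) hm.1 (by
    simp only [Finset.mem_image, Finset.mem_univ, true_and, forall_exists_index,
      forall_apply_eq_imp_iff]
    intro k
    rcases lt_or_ge i k with hik | hki
    · exact .inr (huv k hik.ne' ▸ v.strictMono hik)
    · exact .inl ((u.monotone hki).trans_lt hum))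
  have hψw : w.trans ψ = w := RelEmbedding.ext fun k ↦ hψS _ (hSw k)
  have hθu' : u.trans θ = u := RelEmbedding.ext fun k ↦ hθu _ (by simp)
  have hθψ : (u.trans ψ).trans θ = v := by
    refine RelEmbedding.ext fun k ↦ ?_
    change θ (ψ (u k)) = v k
    rcases eq_or_ne k i with rfl | hk
    · rw [hψ, hθ]
    · rw [hψS _ (hSu k hk), hθu _ (by simp), huv k hk]
  have huψ : r u (u.trans ψ) := hr.trans huw (hr.symm (hψw ▸ hr.map ψ huw))
  simpa only [hθψ, hθu'] using hr.map θ huψ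

theorem rel_of_eq_off (hr : IsInvariantEquiv r) {p q : Fin n ↪o K} (hpq : r p q) {i : Fin n}
    (hi : p i ≠ q i) {u v : Fin n ↪o K} (huv : ∀ k ≠ i, u k = v k) : r u v := by
  rcases lt_trichotomy (u i) (v i) with hlt | heq | hgt
  · obtain ⟨w, huw, hw⟩ := hr.exists_rel_forall_ne hpq hi u
    exact hr.rel_of_lt_of_forall_ne huw hw huv hlt
  · have : u = v := RelEmbedding.ext fun k ↦ by
      rcases eq_or_ne k i with rfl | hk
      exacts [heq, huv k hk]
    exact this ▸ hr.refl u
  · obtain ⟨w, hvw, hw⟩ := hr.exists_rel_forall_ne hpq hi v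
    exact hr.symm (hr.rel_of_lt_of_forall_ne hvw hw (fun k hk ↦ (huv k hk).symm) hgt)

end IsInvariantEquiv

end InvariantEquivalence

section Ranks

open Finset

variable {α : Type*} [LinearOrder α]

/-- The position of `a` in `T`, counted from `0`: the inverse of `nth T` for `a ∈ T ⊆ ℕ`. -/
def rankIn (T : Finset α) (a : α) : ℕ := #{b ∈ T | b < a}

theorem rankIn_lt_card {T : Finset α} {a : α} (ha : a ∈ T) : rankIn T a < #T :=
  card_lt_card (filter_ssubset.2 ⟨a, ha, lt_irrefl a⟩)

theorem rankIn_strictMonoOn (T : Finset α) : StrictMonoOn (rankIn T) T := fun a ha b _ hab ↦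
  card_lt_card <| (ssubset_iff_of_subset fun c hc ↦ by grind).2
    ⟨a, mem_filter.2 ⟨ha, hab⟩, by simp⟩

theorem rankIn_range {N a : ℕ} (ha : a ∈ range N) : rankIn (range N) a = a := by
  have : {b ∈ range N | b < a} = range a := by grind
  rw [rankIn, this, card_range]

theorem rankIn_image {β : Type*} [LinearOrder β] {T : Finset α} {g : α → β}
    (hg : StrictMonoOn g T) {a : α} (ha : a ∈ T) : rankIn (T.image g) (g a) = rankIn T a := by
  have : {b ∈ T.image g | b < g a} = {b ∈ T | b < a}.image g := by
    rw [filter_image]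
    exact congrArg _ (filter_congr fun b hb ↦ hg.lt_iff_lt hb ha)
  rw [rankIn, this, card_image_of_injOn (hg.injOn.mono (filter_subset _ _)), rankIn]

theorem image_rankIn_image {β : Type*} [LinearOrder β] {T x : Finset α} {g : α → β}
    (hg : StrictMonoOn g T) (hx : x ⊆ T) :
    (x.image g).image (rankIn (T.image g)) = x.image (rankIn T) := by
  rw [image_image]
  exact image_congr fun a ha ↦ rankIn_image hg (hx ha)

theorem nth_eq_natNth (s : Finset ℕ) (i : ℕ) : nth s i = Nat.nth (· ∈ s) i := by
  have hs : (Set.ofPred (· ∈ s)).Finite := s.finite_toSet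
  have : hs.toFinset = s := by
    ext
    simp
  rw [Nat.nth_eq_getD_sort hs, this, nth]

theorem nth_rankIn {T : Finset ℕ} {a : ℕ} (ha : a ∈ T) : nth T (rankIn T a) = a := by
  have : rankIn T a = Nat.count (· ∈ T) a := by
    rw [rankIn, Nat.count_eq_card_filter_range]
    exact congrArg _ (by grind)
  rw [nth_eq_natNth, this, Nat.nth_count ha]

theorem image_nth_image_rankIn {T x : Finset ℕ} (hx : x ⊆ T) :
    (x.image (rankIn T)).image (nth T) = x := by
  rw [image_image]
  exact (image_congr fun a ha ↦ nth_rankIn (hx ha)).trans image_id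

theorem image_rankIn_mem_idx {n : ℕ} {T x : Finset α} (hT : #T ≤ 2 * n) (hx : x ⊆ T)
    (hxn : #x = n) : x.image (rankIn T) ∈ idx n := by
  rw [idx, mem_powersetCard, card_image_of_injOn ((rankIn_strictMonoOn T).injOn.mono hx)]
  refine ⟨image_subset_iff.2 fun a ha ↦ ?_, hxn⟩
  exact mem_range.2 ((rankIn_lt_card (hx ha)).trans_le hT)

theorem orderEmbOfFin_eq_nth {s : Finset ℕ} {n : ℕ} (hs : #s = n) (k : Fin n) :
    s.orderEmbOfFin hs k = nth s k := by
  rw [nth, orderEmbOfFin_apply, List.getD_eq_getElem _ _ (by simp [hs])]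
  rfl

theorem nth_le_nth {s : Finset ℕ} {j k : ℕ} (hjk : j ≤ k) (hk : k < #s) : nth s j ≤ nth s k := by
  rw [← orderEmbOfFin_eq_nth rfl ⟨j, hjk.trans_lt hk⟩, ← orderEmbOfFin_eq_nth rfl ⟨k, hk⟩]
  exact (s.orderEmbOfFin rfl).monotone hjk

theorem nth_image_of_strictMono {n : ℕ} {f : Fin n → ℕ} (hf : StrictMono f) (k : Fin n) :
    nth (univ.image f) k = f k := by
  have hcard : #(univ.image f) = n := by simp [card_image_of_injective _ hf.injective]
  rw [← orderEmbOfFin_eq_nth hcard, ← orderEmbOfFin_unique hcard (by simp) hf]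

theorem exists_superset_card_eq_rankIn_eq {X : Set ℕ} (hX : X.Infinite) {w : Finset ℕ}
    (hw : ↑w ⊆ X) {N : ℕ} (hN : #w ≤ N) :
    ∃ z : Finset ℕ, ↑z ⊆ X ∧ #z = N ∧ w ⊆ z ∧ ∀ a ∈ w, rankIn z a = rankIn w a := by
  obtain ⟨t, htX, ht⟩ :=
    (hX.sdiff (Set.finite_Iic (w.sup id))).exists_subset_card_eq (N - #w)
  have hlt : ∀ a ∈ w, ∀ b ∈ t, a < b := fun a ha b hb ↦
    (le_sup (f := id) ha).trans_lt (not_le.1 (htX hb).2)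
  have hdisj : Disjoint w t := disjoint_left.2 fun a ha ha' ↦ (hlt a ha a ha').false
  refine ⟨w ∪ t, ?_, ?_, subset_union_left, fun a ha ↦ congrArg card ?_⟩
  · rw [coe_union]
    exact Set.union_subset hw (htX.trans Set.sdiff_subset)
  · rw [card_union_of_disjoint hdisj, ht, Nat.add_sub_cancel' hN]
  · rw [filter_union, filter_eq_empty_iff.2 fun b hb ↦ (hlt a ha b hb).not_gt, union_empty]

theorem exists_strictMonoOn_mapsTo {X : Set ℕ} (hX : X.Infinite) (T : Finset α) :
    ∃ g : α → ℕ, StrictMonoOn g T ∧ Set.MapsTo g T X :=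
  ⟨Nat.nth (· ∈ X) ∘ rankIn T, (Nat.nth_strictMono hX).comp_strictMonoOn (rankIn_strictMonoOn T),
    fun _ _ ↦ Nat.nth_mem_of_infinite hX _⟩

end Ranks

section EquivP

variable {P : Set (Set (Finset ℕ))} {x y z : Finset ℕ}

theorem EquivP.symm (h : EquivP P x y) : EquivP P y x :=
  let ⟨A, hA, hx, hy⟩ := h
  ⟨A, hA, hy, hx⟩

theorem IsPartitionOn.equivP_refl {Z : Set (Finset ℕ)} (hP : IsPartitionOn Z P) (hx : x ∈ Z) :
    EquivP P x x :=
  let ⟨A, hA, hxA⟩ := hP.1.symm ▸ hx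
  ⟨A, hA, hxA, hxA⟩

theorem IsPartitionOn.equivP_trans {Z : Set (Finset ℕ)} (hP : IsPartitionOn Z P)
    (hxy : EquivP P x y) (hyz : EquivP P y z) : EquivP P x z := by
  obtain ⟨A, hA, hxA, hyA⟩ := hxy
  obtain ⟨B, hB, hyB, hzB⟩ := hyz
  obtain hAB | rfl := hP.2 A hA B hB
  · exact (Set.eq_empty_iff_forall_notMem.1 hAB y ⟨hyA, hyB⟩).elim
  · exact ⟨A, hA, hxA, hzB⟩

end EquivP

section PatternEquiv

open Finset

variable {α : Type*} [LinearOrder α] {n : ℕ} {P : Set (Set (Finset ℕ))} {Q : Set (Finset ℕ)}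
  {X : Set ℕ}

theorem subset_Qpq_iff_mem (hQ : Q ∈ Atoms n P) {p q z : Finset ℕ} (hp : p ∈ idx n) (hq : q ∈ idx n)
    (hz : z ∈ Q) : Q ⊆ Qpq n P p q ↔ z ∈ Qpq n P p q := by
  refine ⟨fun h ↦ h hz, fun hzpq ↦ ?_⟩
  obtain ⟨-, S, hS, rfl⟩ := hQ
  have hQS : ⋂ p ∈ idx n, ⋂ q ∈ idx n, S p q ⊆ S p q :=
    (Set.biInter_subset_of_mem hp).trans (Set.biInter_subset_of_mem hq)
  rcases hS p hp q hq with h | h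
  · exact h ▸ hQS
  · exact absurd hzpq (h ▸ hQS hz).2

/-- The relation `x ≈ y` between finite subsets of a linear order that `Q` dictates through the
relative position of `x` and `y`: it is `Q ⊆ Q_{pq}` for the positions `p`, `q` which `x`, `y`
occupy in `x ∪ y`. -/
def PatternEquiv (n : ℕ) (P : Set (Set (Finset ℕ))) (Q : Set (Finset ℕ)) (x y : Finset α) : Prop :=
  Q ⊆ Qpq n P (x.image (rankIn (x ∪ y))) (y.image (rankIn (x ∪ y)))

theorem patternEquiv_image_iff {β : Type*} [LinearOrder β] {x y : Finset α} {g : α → β}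
    (hg : StrictMonoOn g ↑(x ∪ y)) :
    PatternEquiv n P Q (x.image g) (y.image g) ↔ PatternEquiv n P Q x y := by
  rw [PatternEquiv, PatternEquiv, ← image_union, image_rankIn_image hg subset_union_left,
    image_rankIn_image hg subset_union_right]

theorem patternEquiv_symm {x y : Finset α} (h : PatternEquiv n P Q x y) :
    PatternEquiv n P Q y x := by
  rw [PatternEquiv, union_comm y x]
  exact fun z hz ↦ ⟨(h hz).1, (h hz).2.symm⟩

theorem relQ_of_patternEquiv (hX : X.Infinite) {x y : Finset ℕ} (hx : ↑x ⊆ X) (hy : ↑y ⊆ X)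
    (hxn : #x = n) (hyn : #y = n) (h : PatternEquiv n P Q x y) : RelQ n P Q X x y := by
  have hcard : #(x ∪ y) ≤ 2 * n := by grind [card_union_le]
  obtain ⟨z, hzX, hz, hxyz, hrank⟩ :=
    exists_superset_card_eq_rankIn_eq hX (w := x ∪ y) (by simp [hx, hy]) hcard
  have himage : ∀ s ⊆ x ∪ y, (s.image (rankIn (x ∪ y))).image (nth z) = s := fun s hs ↦
    (congrArg (image (nth z)) (image_congr fun a ha ↦ (hrank a (hs ha)).symm)).trans
      (image_nth_image_rankIn (hs.trans hxyz))
  exact ⟨_, image_rankIn_mem_idx hcard subset_union_left hxn,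
    _, image_rankIn_mem_idx hcard subset_union_right hyn, h,
    z, hzX, hz, himage x subset_union_left, himage y subset_union_right⟩

variable (hQ : Q ∈ Atoms n P) (hX : X.Infinite)
  (hXQ : ∀ z : Finset ℕ, ↑z ⊆ X → #z = 2 * n → z ∈ Q)
include hQ hX hXQ

theorem subset_Qpq_rankIn_iff {T x y : Finset α} (hT : #T ≤ 2 * n) (hx : x ⊆ T) (hy : y ⊆ T)
    (hxn : #x = n) (hyn : #y = n) {g : α → ℕ} (hg : StrictMonoOn g T) (hgX : Set.MapsTo g T X) :
    Q ⊆ Qpq n P (x.image (rankIn T)) (y.image (rankIn T)) ↔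
      EquivP P (x.image g) (y.image g) := by
  obtain ⟨z, hzX, hz, hTz, hrank⟩ := exists_superset_card_eq_rankIn_eq hX (w := T.image g)
    (by simpa using hgX.image_subset) (card_image_le.trans hT)
  have himage : ∀ s ⊆ T, (s.image (rankIn T)).image (nth z) = s.image g := fun s hs ↦ by
    rw [← image_rankIn_image hg hs]
    exact (congrArg (image (nth z))
      (image_congr fun a ha ↦ (hrank a (image_subset_image hs ha)).symm)).trans
        (image_nth_image_rankIn ((image_subset_image hs).trans hTz))
  rw [subset_Qpq_iff_mem hQ (image_rankIn_mem_idx hT hx hxn) (image_rankIn_mem_idx hT hy hyn)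
    (hXQ z hzX hz), ← himage x hx, ← himage y hy]
  exact and_iff_right hz

theorem patternEquiv_iff_equivP {x y : Finset α} (hxn : #x = n) (hyn : #y = n) {g : α → ℕ}
    (hg : StrictMonoOn g ↑(x ∪ y)) (hgX : Set.MapsTo g ↑(x ∪ y) X) :
    PatternEquiv n P Q x y ↔ EquivP P (x.image g) (y.image g) :=
  subset_Qpq_rankIn_iff hQ hX hXQ (by grind [card_union_le]) subset_union_left subset_union_right
    hxn hyn hg hgX

theorem patternEquiv_iff_subset_Qpq {p q : Finset ℕ} (hp : p ∈ idx n) (hq : q ∈ idx n) :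
    PatternEquiv n P Q p q ↔ Q ⊆ Qpq n P p q := by
  obtain ⟨hpr, hpn⟩ := mem_powersetCard.1 hp
  obtain ⟨hqr, hqn⟩ := mem_powersetCard.1 hq
  have hmono := Nat.nth_strictMono (p := (· ∈ X)) hX
  have hmaps : ∀ s : Set ℕ, Set.MapsTo (Nat.nth (· ∈ X)) s X := fun _ _ _ ↦
    Nat.nth_mem_of_infinite hX _
  have hrank : ∀ s ⊆ range (2 * n), s.image (rankIn (range (2 * n))) = s := fun s hs ↦
    (image_congr fun a ha ↦ rankIn_range (hs ha)).trans image_id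
  rw [patternEquiv_iff_equivP hQ hX hXQ hpn hqn (hmono.strictMonoOn _) (hmaps _),
    ← subset_Qpq_rankIn_iff hQ hX hXQ (card_range _).le hpr hqr hpn hqn (hmono.strictMonoOn _)
      (hmaps _), hrank p hpr, hrank q hqr]

theorem patternEquiv_refl (hP : IsPartitionOn (cube n) P) {x : Finset α} (hxn : #x = n) :
    PatternEquiv n P Q x x := by
  obtain ⟨g, hg, hgX⟩ := exists_strictMonoOn_mapsTo hX (x ∪ x)
  rw [patternEquiv_iff_equivP hQ hX hXQ hxn hxn hg hgX]
  rw [union_self] at hg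
  exact hP.equivP_refl ((card_image_of_injOn hg.injOn).trans hxn)

theorem patternEquiv_trans (hP : IsPartitionOn (cube n) P) {x y z : Finset α} (hxn : #x = n)
    (hyn : #y = n) (hzn : #z = n) (hxy : PatternEquiv n P Q x y) (hyz : PatternEquiv n P Q y z) :
    PatternEquiv n P Q x z := by
  obtain ⟨g, hg, hgX⟩ := exists_strictMonoOn_mapsTo hX (x ∪ y ∪ z)
  have key {s t : Finset α} (hs : #s = n) (ht : #t = n) (hst : s ∪ t ⊆ x ∪ y ∪ z) :
      PatternEquiv n P Q s t ↔ EquivP P (s.image g) (t.image g) :=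
    patternEquiv_iff_equivP hQ hX hXQ hs ht (hg.mono hst) (hgX.mono_left hst)
  rw [key hxn hyn (by grind)] at hxy
  rw [key hyn hzn (by grind)] at hyz
  exact (key hxn hzn (by grind)).2 (hP.equivP_trans hxy hyz)

theorem isInvariantEquiv_patternEquiv (hP : IsPartitionOn (cube n) P) :
    IsInvariantEquiv fun u v : Fin n ↪o α ↦
      PatternEquiv n P Q (univ.image u) (univ.image v) where
  refl u := patternEquiv_refl hQ hX hXQ hP (by simp [card_image_of_injective _ u.injective])
  symm h := patternEquiv_symm h
  trans {u v w} := by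
    have hcard (u : Fin n ↪o α) : #(univ.image u) = n := by
      simp [card_image_of_injective _ u.injective]
    exact patternEquiv_trans hQ hX hXQ hP (hcard u) (hcard v) (hcard w)
  map φ u v h := by
    have := (patternEquiv_image_iff (φ.strictMono.strictMonoOn _)).2 h
    rwa [image_image, image_image] at this

end PatternEquiv

section Rational

open Finset

variable {n : ℕ}

/-- The increasing enumeration of an `n`-element set of naturals, with values in the dense
order `ℚ`. -/
def ratTuple (s : Finset ℕ) (hs : #s = n) : Fin n ↪o ℚ :=
  (s.orderEmbOfFin hs).trans Nat.castOrderEmbedding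

theorem ratTuple_apply {s : Finset ℕ} (hs : #s = n) (k : Fin n) : ratTuple s hs k = nth s k :=
  congrArg Nat.cast (orderEmbOfFin_eq_nth hs k)

theorem image_ratTuple_univ {s : Finset ℕ} (hs : #s = n) :
    univ.image (ratTuple s hs) = s.image ((↑) : ℕ → ℚ) := by
  conv_rhs => rw [← image_orderEmbOfFin_univ s hs, image_image]
  rfl

theorem patternEquiv_ratTuple_iff {P : Set (Set (Finset ℕ))} {Q : Set (Finset ℕ)} {x y : Finset ℕ}
    (hx : #x = n) (hy : #y = n) :
    PatternEquiv n P Q (univ.image (ratTuple x hx)) (univ.image (ratTuple y hy)) ↔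
      PatternEquiv n P Q x y := by
  rw [image_ratTuple_univ, image_ratTuple_univ]
  exact patternEquiv_image_iff (Nat.strictMono_cast.strictMonoOn _)

end Rational

section Replacement

open Finset

theorem strictMono_update_of_le {ι α : Type*} [LinearOrder ι] [Preorder α] {f : ι → α}
    (hf : StrictMono f) {i : ι} {a : α} (hlt : ∀ k < i, f k < a) (hle : a ≤ f i) :
    StrictMono (Function.update f i a) := by
  intro j k hjk
  rcases eq_or_ne j i with rfl | hj
  · rw [Function.update_self, Function.update_of_ne hjk.ne']
    exact hle.trans_lt (hf hjk)
  rcases eq_or_ne k i with rfl | hk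
  · rw [Function.update_self, Function.update_of_ne hj]
    exact hlt j hjk
  · rw [Function.update_of_ne hj, Function.update_of_ne hk]
    exact hf hjk

theorem image_update_univ {ι α : Type*} [Fintype ι] [DecidableEq ι] [DecidableEq α] {f : ι → α}
    (hf : Function.Injective f) (i : ι) (a : α) :
    univ.image (Function.update f i a) = insert a ((univ.image f).erase (f i)) := by
  rw [← image_erase hf, ← insert_erase (mem_univ i), image_insert, erase_insert_eq_erase,
    erase_idem, Function.update_self]
  refine congrArg _ (image_congr fun k hk ↦ ?_)
  exact Function.update_of_ne (ne_of_mem_erase hk) _ _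

theorem nth_erase_union_singleton {n : ℕ} {x : Finset ℕ} (hxn : #x = n) {i a : ℕ} (hi : i < n)
    (hprev : i = 0 ∨ nth x (i - 1) < a) (hle : a ≤ nth x i) :
    #(x.erase (nth x i) ∪ {a}) = n ∧
      ∀ k < n, k ≠ i → nth (x.erase (nth x i) ∪ {a}) k = nth x k := by
  have hx (k : Fin n) : x.orderEmbOfFin hxn k = nth x k := orderEmbOfFin_eq_nth hxn k
  let f : Fin n → ℕ := Function.update (x.orderEmbOfFin hxn) ⟨i, hi⟩ a
  have hf : StrictMono f := by
    refine strictMono_update_of_le (x.orderEmbOfFin hxn).strictMono (fun k hk ↦ ?_)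
      (hle.trans_eq (hx ⟨i, hi⟩).symm)
    have hki : (k : ℕ) < i := hk
    calc x.orderEmbOfFin hxn k = nth x k := hx k
      _ ≤ nth x (i - 1) := nth_le_nth (by omega) (by omega)
      _ < a := hprev.resolve_left (by omega)
  have himage : univ.image f = x.erase (nth x i) ∪ {a} := by
    rw [image_update_univ (x.orderEmbOfFin hxn).injective, x.image_orderEmbOfFin_univ, hx,
      union_comm, insert_eq]
  rw [← himage]
  refine ⟨by simp [card_image_of_injective _ hf.injective], fun k hk hki ↦ ?_⟩
  rw [nth_image_of_strictMono hf ⟨k, hk⟩, ← hx ⟨k, hk⟩]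
  exact Function.update_of_ne (by simpa only [ne_eq, Fin.ext_iff] using hki) _ _

end Replacement

theorem exists_nth_ne_of_notMem_IofQ {n : ℕ} {P : Set (Set (Finset ℕ))} {Q : Set (Finset ℕ)} {i : ℕ}
    (hi : i < n) (hiI : i ∉ IofQ n P Q) :
    ∃ p ∈ idx n, ∃ q ∈ idx n, Q ⊆ Qpq n P p q ∧ nth p i ≠ nth q i := by
  contrapose! hiI
  simp only [IofQ, Set.mem_iInter]
  exact fun p hp q hq hpq ↦ ⟨hi, hiI p hp q hq hpq⟩

theorem stmt_14_general (n : ℕ) (P : Set (Set (Finset ℕ))) (hP : IsPartitionOn (cube n) P)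
    (Q : Set (Finset ℕ)) (hQ : Q ∈ Atoms n P) (X : Set ℕ) (hX : X.Infinite)
    (hXQ : ∀ z : Finset ℕ, ↑z ⊆ X → z.card = 2 * n → z ∈ Q)
    (i : ℕ) (hi : i < n) (hiI : i ∉ IofQ n P Q)
    (x : Finset ℕ) (hx : ↑x ⊆ X) (hxc : x.card = n)
    (y : Finset ℕ) (hy : ↑y ⊆ X) (hyc : y.card = n)
    (hxy : ∀ k < n, k ≠ i → nth x k = nth y k) :
    RelQ n P Q X x y := by
  obtain ⟨p, hp, q, hq, hpq, hne⟩ := exists_nth_ne_of_notMem_IofQ hi hiI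
  have hpc := (Finset.mem_powersetCard.1 hp).2
  have hqc := (Finset.mem_powersetCard.1 hq).2
  rw [← patternEquiv_iff_subset_Qpq hQ hX hXQ hp hq, ← patternEquiv_ratTuple_iff hpc hqc] at hpq
  refine relQ_of_patternEquiv hX hx hy hxc hyc ((patternEquiv_ratTuple_iff hxc hyc).1 ?_)
  refine (isInvariantEquiv_patternEquiv hQ hX hXQ hP).rel_of_eq_off hpq (i := ⟨i, hi⟩) ?_ ?_
  · simpa only [ratTuple_apply, ne_eq, Nat.cast_inj] using hne
  · intro k hk
    rw [ratTuple_apply, ratTuple_apply, hxy k k.2 (by simpa [Fin.ext_iff] using hk)]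

/-- let `x ∈ [X⁻]^n`, `i < n` with `i ∉ I(Q)`, `x' ∈ X`,
`y = (x ∖ {x_[i]}) ∪ {x'}`, `min(d(x), d(y)) ≥ m = n^{n·B·(B-1)}`, and either
(`i ≥ 1` and `x_[i-1] < x' ≤ x_[i]`) or (`i = 0` and `e < x' ≤ x_[0]`).
Then `x ↔_Q y`. -/
theorem stmt_14 (n : ℕ) (hn : 2 ≤ n) (P : Set (Set (Finset ℕ)))
    (hP : IsPartitionOn (cube n) P) (Q : Set (Finset ℕ)) (hQ : Q ∈ Atoms n P)
    (X : Set ℕ) (hX : X.Infinite)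
    (hXQ : ∀ z : Finset ℕ, ↑z ⊆ X → z.card = 2 * n → z ∈ Q)
    (e : ℕ) (he : e = sInf X)
    (m : ℕ) (hm : m = n ^ (n * Nat.choose (2 * n) n * (Nat.choose (2 * n) n - 1)))
    (x : Finset ℕ) (hx : ↑x ⊆ X \ {e}) (hxc : x.card = n)
    (i : ℕ) (hi : i < n) (hiI : i ∉ IofQ n P Q)
    (x' : ℕ) (hx' : x' ∈ X)
    (y : Finset ℕ) (hy : y = x.erase (nth x i) ∪ {x'})
    (hdx : (m : ℕ∞) ≤ sparsity X e x) (hdy : (m : ℕ∞) ≤ sparsity X e y)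
    (hrange : (1 ≤ i ∧ nth x (i - 1) < x' ∧ x' ≤ nth x i) ∨
      (i = 0 ∧ e < x' ∧ x' ≤ nth x 0)) :
    RelQ n P Q X x y := by
  obtain ⟨hyc, hnth⟩ := nth_erase_union_singleton hxc hi (a := x') (by grind) (by grind)
  have hxX : ↑x ⊆ X := hx.trans Set.sdiff_subset
  have hyX : ↑y ⊆ X := fun b hb ↦ by grind
  exact stmt_14_general n P hP Q hQ X hX hXQ i hi hiI x hxX hxc y hyX (hy ▸ hyc)
    fun k hk hki ↦ hy ▸ (hnth k hk hki).symm
end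

section
/- A nonprincipal ultrafilter u on ℕ is a Ramsey ultrafilter if and only if for every n ≥ 1 and every partition P of [ω]^n (arbitrary, not necessarily finite), u contains some set X that is canonical for P. -/
/-!
A Ramsey ultrafilter contains, for every relation on tuples, a set `X` on which the relation
depends only on how the points of a tuple are ordered: colour an `m`-element set by the patterns
through which it satisfies the relation. Applied to the relation `f a = f b` on pairs of
`n`-tuples, this reduces canonization to functions `f` for which the truth of `f a = f b` depends
only on the relative order of the points of `a` and `b`. For such an `f`, a coordinate that can
once be moved on its own without changing `f` can always be moved, and the immovable coordinates
form the canonical index set. Suppose that `f a = f b`, but `a` and `b` disagree in an immovable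
coordinate; let `i` be the first one, with `a i < b i`. Moving movable coordinates of `b` makes
room around `a i`, and then `a i` can be raised without changing its position relative to `b`, so
`i` is movable after all.

Conversely, if a partition is `I`-canonical on an infinite set with `I` nonempty, then it has
infinitely many members; so for finite partitions canonical sets are homogeneous.
-/

section SameOrder

variable {ι α β : Type*} [LinearOrder α] [LinearOrder β]

/-- Two families of points, possibly in different linear orders, have the same order pattern. By
trichotomy this also says that the same equalities `s i = s j` and `t i = t j` hold. -/
def SameOrder (s : ι → α) (t : ι → β) : Prop := ∀ i j, s i < s j ↔ t i < t j

theorem SameOrder.eq_of_eq {s : ι → α} {t : ι → β} (h : SameOrder s t) {i j : ι}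
    (hij : s i = s j) : t i = t j :=
  le_antisymm (not_lt.1 fun hlt => ((h j i).2 hlt).ne' hij)
    (not_lt.1 fun hlt => ((h i j).2 hlt).ne hij)

theorem sameOrder_comp_of_strictMono {g : α → β} (hg : StrictMono g) (s : ι → α) :
    SameOrder s (g ∘ s) :=
  fun _ _ => hg.lt_iff_lt.symm

theorem SameOrder.comp_strictMono {γ δ : Type*} [LinearOrder γ] [LinearOrder δ] {s : ι → α}
    {t : ι → β} (h : SameOrder s t) {g : α → γ} (hg : StrictMono g) {k : β → δ}
    (hk : StrictMono k) : SameOrder (g ∘ s) (k ∘ t) :=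
  fun i j => hg.lt_iff_lt.trans ((h i j).trans hk.lt_iff_lt.symm)

theorem sameOrder_sumElim {ι' : Type*} [LinearOrder ι] [LinearOrder ι'] {a : ι → α} {b : ι' → α}
    {c : ι → β} {d : ι' → β} (ha : StrictMono a) (hb : StrictMono b) (hc : StrictMono c)
    (hd : StrictMono d) (hlt : ∀ i j, a i < b j ↔ c i < d j) (hgt : ∀ i j, b i < a j ↔ d i < c j) :
    SameOrder (Sum.elim a b) (Sum.elim c d) := by
  rintro (i | i) (j | j)
  · exact ha.lt_iff_lt.trans hc.lt_iff_lt.symm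
  · exact hlt i j
  · exact hgt i j
  · exact hb.lt_iff_lt.trans hd.lt_iff_lt.symm

theorem SameOrder.exists_eq_orderEmbedding_comp [Finite ι] {s : ι → α} {t : ι → β}
    (h : SameOrder s t) :
    ∃ m ≤ Nat.card ι, ∃ (p : ι → Fin m) (z : Fin m ↪o α) (w : Fin m ↪o β),
      z ∘ p = s ∧ w ∘ p = t := by
  classical
  have := Fintype.ofFinite ι
  let S := Finset.univ.image s
  let z : Fin S.card ↪o α := S.orderEmbOfFin rfl
  have hrange : Set.range z = Set.range s := by simp [z, S]
  choose p hp using fun i => hrange.symm.subset (Set.mem_range_self i)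
  choose r hr using fun k => hrange.subset (Set.mem_range_self k)
  have hw : StrictMono (t ∘ r) := fun k l hkl => (h _ _).1 (by simpa only [hr, z.lt_iff_lt])
  refine ⟨S.card, ?_, p, z, OrderEmbedding.ofStrictMono _ hw, funext hp, funext fun i => ?_⟩
  · simpa using Finset.card_image_le (s := Finset.univ) (f := s)
  · exact h.eq_of_eq ((hr (p i)).trans (hp i))

end SameOrder

section Canonization

open Function

variable {ι α κ : Type*} [LinearOrder α] {f : (ι → α) → κ}

/-- Whether `f a = f b` holds depends only on the order pattern of the points of `a` and `b`. -/
def HasOrderInvariantKer (f : (ι → α) → κ) : Prop :=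
  ∀ a b c d, SameOrder (Sum.elim a b) (Sum.elim c d) → f a = f b → f c = f d

theorem HasOrderInvariantKer.comp_strictMono {γ : Type*} [LinearOrder γ]
    (hf : HasOrderInvariantKer f) {g : γ → α} (hg : StrictMono g) :
    HasOrderInvariantKer fun a : ι → γ => f (g ∘ a) := fun a b c d h =>
  hf _ _ _ _ (by simpa only [Sum.comp_elim] using h.comp_strictMono hg hg)

variable [LinearOrder ι] {a b : ι → α} {i : ι}

/-- `f` is canonical on increasing tuples, with index set `I`: the values of `f` at two of them
agree exactly when their coordinates in `I` do. -/
def IsCanonical (f : (ι → α) → κ) (I : Set ι) : Prop :=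
  ∀ a b, StrictMono a → StrictMono b → (f a = f b ↔ ∀ i ∈ I, a i = b i)

/-- The coordinate `i` is movable: some increasing tuple stays increasing and keeps its value under
`f` when its `i`-th coordinate alone is raised. -/
def IsMovable (f : (ι → α) → κ) (i : ι) : Prop :=
  ∃ a x, StrictMono a ∧ StrictMono (update a i x) ∧ a i < x ∧ f a = f (update a i x)

theorem lt_update_iff_of_strictMono {x : α} (ha : StrictMono a) (hax : StrictMono (update a i x))
    (hx : a i < x) (k l : ι) : a k < update a i x l ↔ k < l ∨ k = i ∧ l = i := by
  rcases eq_or_ne k i with rfl | hk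
  · rcases eq_or_ne l k with rfl | hl
    · simpa
    · simp [hl, ha.lt_iff_lt]
  · rw [← update_of_ne hk x a, hax.lt_iff_lt]
    simp [hk]

theorem update_lt_iff_of_strictMono {x : α} (ha : StrictMono a) (hax : StrictMono (update a i x))
    (hx : a i < x) (k l : ι) : update a i x k < a l ↔ k < l := by
  rcases eq_or_ne l i with rfl | hl
  · rcases eq_or_ne k l with rfl | hk
    · simpa using hx.le
    · simp [hk, ha.lt_iff_lt]
  · rw [← update_of_ne hl x a, hax.lt_iff_lt]

theorem sameOrder_sumElim_update {c : ι → α} {x y : α} (ha : StrictMono a)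
    (hax : StrictMono (update a i x)) (hx : a i < x) (hc : StrictMono c)
    (hcy : StrictMono (update c i y)) (hy : c i < y) :
    SameOrder (Sum.elim a (update a i x)) (Sum.elim c (update c i y)) :=
  sameOrder_sumElim ha hax hc hcy
    (fun k l => (lt_update_iff_of_strictMono ha hax hx k l).trans
      (lt_update_iff_of_strictMono hc hcy hy k l).symm)
    (fun k l => (update_lt_iff_of_strictMono ha hax hx k l).trans
      (update_lt_iff_of_strictMono hc hcy hy k l).symm)

theorem sameOrder_sumElim_update_of_gap {x : α} (ha : StrictMono a)
    (hax : StrictMono (update a i x)) (hb : StrictMono b) (hx : a i ≤ x)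
    (hgap : ∀ l, b l ∉ Set.Icc (a i) x) : SameOrder (Sum.elim a b) (Sum.elim (update a i x) b) := by
  refine sameOrder_sumElim ha hb hax hb (fun k l => ?_) (fun l k => ?_)
  · rcases eq_or_ne k i with rfl | hk
    · rw [update_self]
      exact ⟨fun h => not_le.1 fun hle => hgap l ⟨h.le, hle⟩, hx.trans_lt⟩
    · rw [update_of_ne hk]
  · rcases eq_or_ne k i with rfl | hk
    · rw [update_self]
      exact ⟨fun h => h.trans_le hx, fun h => not_le.1 fun hle => hgap l ⟨hle, h.le⟩⟩
    · rw [update_of_ne hk]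

theorem strictMono_update_of_le_s16 (ha : StrictMono a) (hb : StrictMono b) (hi : a i ≤ b i)
    (hgt : ∀ j, i < j → a j = b j) : StrictMono (update a i (b i)) := by
  intro k l hkl
  rcases eq_or_ne k i with rfl | hk
  · simpa [hkl.ne', hgt l hkl] using hb hkl
  · rcases eq_or_ne l i with rfl | hl
    · simpa [hk] using (ha hkl).trans_le hi
    · simpa [hk, hl] using ha hkl

namespace HasOrderInvariantKer

theorem eq_update (hf : HasOrderInvariantKer f) (hi : IsMovable f i) (ha : StrictMono a) {x : α}
    (hax : StrictMono (update a i x)) (hx : a i < x) : f a = f (update a i x) := by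
  obtain ⟨c, y, hc, hcy, hy, hfc⟩ := hi
  exact hf _ _ _ _ (sameOrder_sumElim_update hc hcy hy ha hax hx) hfc

/- Raising the coordinates of `a` to those of `b` one at a time, the largest first, keeps the tuple
increasing. -/
theorem eq_of_le [Finite ι] (hf : HasOrderInvariantKer f) (ha : StrictMono a)
    (hb : StrictMono b) (hab : a ≤ b) (hmov : ∀ i, a i ≠ b i → IsMovable f i) : f a = f b := by
  obtain ⟨s, hs⟩ : ∃ s : Finset ι, ∀ i, i ∈ s ↔ a i ≠ b i :=
    ⟨(Set.toFinite {i | a i ≠ b i}).toFinset, by simp⟩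
  induction s using Finset.induction_on_max generalizing a with
  | empty => exact congrArg f (funext fun i => by simpa using hs i)
  | insert m s hm ih =>
    have hgt (j) (hj : m < j) : a j = b j := by
      by_contra hne
      rcases Finset.mem_insert.1 ((hs j).2 hne) with rfl | hjs
      · exact hj.false
      · exact (hm j hjs).not_gt hj
    have hne : a m ≠ b m := (hs m).1 (Finset.mem_insert_self m s)
    have hup : StrictMono (update a m (b m)) := strictMono_update_of_le_s16 ha hb (hab m) hgt
    have hs' (i) : i ∈ s ↔ update a m (b m) i ≠ b i := by
      rcases eq_or_ne i m with rfl | him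
      · simpa using fun his => (hm i his).false
      · simpa [him] using hs i
    calc
      f a = f (update a m (b m)) := hf.eq_update (hmov m hne) ha hup ((hab m).lt_of_ne hne)
      _ = f b := ih hup (update_le_iff.2 ⟨le_rfl, fun j _ => hab j⟩)
        (fun i hi => hmov i ((hs i).1 (Finset.mem_insert_of_mem ((hs' i).2 hi)))) hs'

theorem eq_of_forall_ne [Finite ι] (hf : HasOrderInvariantKer f) (ha : StrictMono a)
    (hb : StrictMono b) (hmov : ∀ i, a i ≠ b i → IsMovable f i) : f a = f b := by
  have hab : StrictMono (a ⊔ b) := fun i j hij => max_lt_max (ha hij) (hb hij)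
  calc
    f a = f (a ⊔ b) := hf.eq_of_le ha hab le_sup_left fun i hi => hmov i fun h => hi (by simp [h])
    _ = f b := (hf.eq_of_le hb hab le_sup_right fun i hi => hmov i fun h => hi (by simp [h])).symm

theorem isMovable_of_lt [Finite ι] {f : (ι → ℕ) → κ} (hf : HasOrderInvariantKer f)
    {a b : ι → ℕ} (ha : StrictMono a) (hb : StrictMono b) (hfab : f a = f b) (hi : a i < b i)
    (hmov : ∀ j < i, a j ≠ b j → IsMovable f j) : IsMovable f i := by
  classical
  -- Spreading by the factor 3 leaves room to lower movable points of `b` and to raise `a i`.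
  let spread : ℕ → ℕ := fun x => 3 * x + 1
  let b' : ι → ℕ := fun j => if IsMovable f j then 3 * b j else 3 * b j + 1
  have h_spread : StrictMono spread := fun x y hxy => by simp only [spread]; omega
  have hb' : StrictMono b' := fun j k hjk => by
    have := hb hjk
    simp only [b']; split_ifs <;> omega
  have ha' : StrictMono (update (spread ∘ a) i (3 * a i + 2)) := fun j k hjk => by
    have := ha hjk
    simp only [update_apply, comp_apply, spread]; split_ifs <;> subst_vars <;> omega
  have h_spread_ab : SameOrder (Sum.elim a b) (Sum.elim (spread ∘ a) (spread ∘ b)) := by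
    simpa only [Sum.comp_elim] using sameOrder_comp_of_strictMono h_spread (Sum.elim a b)
  have hfab' : f (spread ∘ a) = f b' := calc
    f (spread ∘ a) = f (spread ∘ b) := hf _ _ _ _ h_spread_ab hfab
    _ = f b' := hf.eq_of_forall_ne (h_spread.comp hb) hb' fun j hj => by
      by_contra hmj
      exact hj (by simp [spread, b', hmj])
  have hgap (l) : b' l ∉ Set.Icc (3 * a i + 1) (3 * a i + 2) := by
    rintro ⟨h_ge, h_le⟩
    have hml : ¬IsMovable f l := fun h => by simp only [b', if_pos h] at h_ge h_le; omega
    have hbl : b l = a i := by simp only [b', if_neg hml] at h_ge h_le; omega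
    have hli : l < i := hb.lt_iff_lt.1 (hbl ▸ hi)
    exact hml (hmov l hli (hbl ▸ (ha hli).ne))
  have hsame : SameOrder (Sum.elim (spread ∘ a) b')
      (Sum.elim (update (spread ∘ a) i (3 * a i + 2)) b') :=
    sameOrder_sumElim_update_of_gap (h_spread.comp ha) ha' hb' (by simp [spread]) hgap
  have hfa' : f (update (spread ∘ a) i (3 * a i + 2)) = f b' := hf _ _ _ _ hsame hfab'
  exact ⟨spread ∘ a, 3 * a i + 2, h_spread.comp ha, ha', by simp [spread], hfab'.trans hfa'.symm⟩

theorem isCanonical_nat [Finite ι] {f : (ι → ℕ) → κ} (hf : HasOrderInvariantKer f) :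
    IsCanonical f {i | ¬IsMovable f i} := by
  intro a b ha hb
  refine ⟨fun hfab i => ?_, fun h => hf.eq_of_forall_ne ha hb fun i hi => by_contra fun hmi =>
    hi (h i hmi)⟩
  induction i using WellFoundedLT.induction with
  | ind i ih =>
    intro hmi
    have hmov (j) (hj : j < i) (hne : a j ≠ b j) : IsMovable f j :=
      by_contra fun hmj => hne (ih j hj hmj)
    rcases lt_trichotomy (a i) (b i) with hlt | heq | hgt
    · exact absurd (hf.isMovable_of_lt ha hb hfab hlt hmov) hmi
    · exact heq
    · exact absurd (hf.isMovable_of_lt hb ha hfab.symm hgt fun j hj hne => hmov j hj hne.symm) hmi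

theorem exists_isCanonical [Finite ι] (hf : HasOrderInvariantKer f) (g : ℕ ≃o α) :
    ∃ I, IsCanonical f I := by
  refine ⟨{i | ¬IsMovable (fun a : ι → ℕ => f (g ∘ a)) i}, fun a b ha hb => ?_⟩
  have h := (hf.comp_strictMono g.strictMono).isCanonical_nat (g.symm ∘ a) (g.symm ∘ b)
    (g.symm.strictMono.comp ha) (g.symm.strictMono.comp hb)
  have hg (c : ι → α) : g ∘ g.symm ∘ c = c := funext fun _ => g.apply_symm_apply _
  simpa only [hg, comp_apply, g.symm.injective.eq_iff] using h

end HasOrderInvariantKer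

end Canonization

theorem nth_eq_orderEmbOfFin {n : ℕ} {s : Finset ℕ} (hs : s.card = n) (i : Fin n) :
    nth s i = s.orderEmbOfFin hs i := by
  rw [Finset.orderEmbOfFin_apply, nth, List.getD_eq_getElem _ 0 (by simp [hs])]
  rfl

theorem nth_image_univ {n : ℕ} {a : Fin n → ℕ} (ha : StrictMono a) (i : Fin n) :
    nth (Finset.univ.image a) i = a i := by
  have hcard : (Finset.univ.image a).card = n := by
    simp [Finset.card_image_of_injective _ ha.injective]
  rw [nth_eq_orderEmbOfFin hcard, ← Finset.orderEmbOfFin_unique hcard (by simp) ha]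

section Partitions

variable {Z : Set (Finset ℕ)} {P : Set (Set (Finset ℕ))} {p q : Finset ℕ}

namespace IsPartitionOn

theorem exists_mem (hP : IsPartitionOn Z P) (hp : p ∈ Z) : ∃ A ∈ P, p ∈ A := by
  rwa [← hP.1] at hp

theorem eq_of_mem (hP : IsPartitionOn Z P) {A B : Set (Finset ℕ)} (hA : A ∈ P) (hB : B ∈ P)
    (hpA : p ∈ A) (hpB : p ∈ B) : A = B :=
  (hP.2 A hA B hB).resolve_left (Set.Nonempty.ne_empty ⟨p, hpA, hpB⟩)

theorem setOf_equivP_eq_iff (hP : IsPartitionOn Z P) (hp : p ∈ Z) :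
    {s | EquivP P p s} = {s | EquivP P q s} ↔ EquivP P p q := by
  obtain ⟨A, hA, hpA⟩ := hP.exists_mem hp
  constructor
  · intro h
    obtain ⟨B, hB, hqB, hpB⟩ : EquivP P q p := h.subset ⟨A, hA, hpA, hpA⟩
    exact ⟨B, hB, hpB, hqB⟩
  · rintro ⟨B, hB, hpB, hqB⟩
    ext s
    constructor
    · rintro ⟨C, hC, hpC, hsC⟩
      exact ⟨C, hC, hP.eq_of_mem hB hC hpB hpC ▸ hqB, hsC⟩
    · rintro ⟨C, hC, hqC, hsC⟩
      exact ⟨C, hC, hP.eq_of_mem hB hC hqB hqC ▸ hpB, hsC⟩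

end IsPartitionOn

theorem isPartitionOn_range_fiber {κ : Type*} (Z : Set (Finset ℕ)) (χ : Finset ℕ → κ) :
    IsPartitionOn Z (Set.range fun c => {s ∈ Z | χ s = c}) := by
  refine ⟨by ext s; simp, ?_⟩
  rintro _ ⟨c, rfl⟩ _ ⟨d, rfl⟩
  rcases eq_or_ne c d with rfl | hcd
  · exact Or.inr rfl
  · refine Or.inl (Set.disjoint_iff_inter_eq_empty.1 (Set.disjoint_left.2 ?_))
    rintro s ⟨_, rfl⟩ ⟨_, rfl⟩
    exact hcd rfl

theorem canon_of_isCanonical {n : ℕ} (hP : IsPartitionOn (cube n) P) {X : Set ℕ} {I : Set (Fin n)}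
    (h : IsCanonical (fun a : Fin n → X =>
      {s | EquivP P (Finset.univ.image (Subtype.val ∘ a)) s}) I) : Canon n P X := by
  refine ⟨Fin.val '' I, by rintro _ ⟨i, _, rfl⟩; exact i.2, fun p q hpX hp hqX hq => ?_⟩
  let a : Fin n → X := fun i => ⟨p.orderEmbOfFin hp i, hpX (p.orderEmbOfFin_mem hp i)⟩
  let b : Fin n → X := fun i => ⟨q.orderEmbOfFin hq i, hqX (q.orderEmbOfFin_mem hq i)⟩
  have ha : Finset.univ.image (Subtype.val ∘ a) = p := p.image_orderEmbOfFin_univ hp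
  have hb : Finset.univ.image (Subtype.val ∘ b) = q := q.image_orderEmbOfFin_univ hq
  have hab : {s | EquivP P (Finset.univ.image (Subtype.val ∘ a)) s} =
      {s | EquivP P (Finset.univ.image (Subtype.val ∘ b)) s} ↔ ∀ i ∈ I, a i = b i :=
    h a b (p.orderEmbOfFin hp).strictMono (q.orderEmbOfFin hq).strictMono
  rw [ha, hb, hP.setOf_equivP_eq_iff hp] at hab
  simpa only [Set.forall_mem_image, nth_eq_orderEmbOfFin hp, nth_eq_orderEmbOfFin hq, a, b,
    Subtype.mk.injEq] using hab

theorem ICanon.eq_empty {n : ℕ} {I X : Set ℕ} (h : ICanon n P I X) (hI : I ⊆ Set.Iio n)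
    (hP : IsPartitionOn (cube n) P) (hfin : P.Finite) (hX : X.Infinite) : I = ∅ := by
  classical
  have := hX.to_subtype
  have := hfin.to_subtype
  refine Set.eq_empty_of_forall_notMem fun i hi => ?_
  let e := Nat.orderEmbeddingOfSet X
  let t : ℕ → Fin n → ℕ := fun m j => e (m + j)
  have ht (m) : StrictMono (t m) := fun j k hjk => e.strictMono (by simpa using hjk)
  have htX (m) : ↑(Finset.univ.image (t m)) ⊆ X := by
    rintro _ hx
    obtain ⟨j, -, rfl⟩ := Finset.mem_image.1 hx
    exact Nat.orderEmbeddingOfSet_range X ▸ Set.mem_range_self _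
  have ht_card (m) : (Finset.univ.image (t m)).card = n := by
    simp [Finset.card_image_of_injective _ (ht m).injective]
  choose A hAP hA using fun m => hP.exists_mem (ht_card m)
  obtain ⟨m, m', hne, heq⟩ :=
    Finite.exists_ne_map_eq_of_infinite fun m => (⟨A m, hAP m⟩ : P)
  have h_equiv : EquivP P (Finset.univ.image (t m)) (Finset.univ.image (t m')) :=
    ⟨A m, hAP m, hA m, (Subtype.mk.inj heq).symm ▸ hA m'⟩
  have h_nth := (h _ _ (htX m) (ht_card m) (htX m') (ht_card m')).1 h_equiv i hi
  let i' : Fin n := ⟨i, hI hi⟩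
  have h_eq : e (m + i) = e (m' + i) := by
    rwa [nth_image_univ (ht m) i', nth_image_univ (ht m') i'] at h_nth
  exact hne (Nat.add_right_cancel (e.injective h_eq))

theorem Canon.homog {n : ℕ} {X : Set ℕ} (h : Canon n P X) (hP : IsPartitionOn (cube n) P)
    (hfin : P.Finite) (hX : X.Infinite) : Homog n P X := by
  obtain ⟨I, hI, hcan⟩ := h
  obtain rfl := hcan.eq_empty hI hP hfin hX
  obtain ⟨p, hpX, hp⟩ := hX.exists_subset_card_eq n
  obtain ⟨A, hA, hpA⟩ := hP.exists_mem hp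
  refine ⟨A, hA, fun s hsX hs => ?_⟩
  obtain ⟨B, hB, hpB, hsB⟩ := (hcan p s hpX hp hsX hs).2 fun i hi => hi.elim
  exact hP.eq_of_mem hA hB hpA hpB ▸ hsB

end Partitions

theorem Nonprincipal.infinite_of_mem {u : Ultrafilter ℕ} (hu : Nonprincipal u) {X : Set ℕ}
    (hX : X ∈ u) : X.Infinite := fun hfin => hu X hfin hX

namespace IsRamseyU

variable {u : Ultrafilter ℕ} {ι κ : Type*}

theorem exists_forall_eq [Finite κ] (hR : IsRamseyU u) (m : ℕ) (χ : Finset ℕ → κ) :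
    ∃ X ∈ u, ∀ s t : Finset ℕ, ↑s ⊆ X → ↑t ⊆ X → s.card = m → t.card = m → χ s = χ t := by
  rcases Nat.eq_zero_or_pos m with rfl | hm
  · refine ⟨Set.univ, Filter.univ_mem, fun s t _ _ hs ht => ?_⟩
    rw [Finset.card_eq_zero.1 hs, Finset.card_eq_zero.1 ht]
  · obtain ⟨X, hX, _, ⟨c, rfl⟩, hc⟩ :=
      hR.2 m hm _ (isPartitionOn_range_fiber (cube m) χ) (Set.finite_range _)
    exact ⟨X, hX, fun s t hsX htX hs ht => (hc s hsX hs).2.trans (hc t htX ht).2.symm⟩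

theorem exists_forall_comp_iff [Finite ι] (hR : IsRamseyU u) (Q : (ι → ℕ) → Prop) (m : ℕ) :
    ∃ X ∈ u, ∀ (p : ι → Fin m) (z w : Fin m → X), StrictMono z → StrictMono w →
      (Q (Subtype.val ∘ z ∘ p) ↔ Q (Subtype.val ∘ w ∘ p)) := by
  obtain ⟨X, hXu, hX⟩ := hR.exists_forall_eq m fun s => {p : ι → Fin m | Q fun i => nth s (p i)}
  have himage_sub (z : Fin m → X) : ↑(Finset.univ.image (Subtype.val ∘ z)) ⊆ X := by
    rintro _ hx
    obtain ⟨j, -, rfl⟩ := Finset.mem_image.1 hx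
    exact (z j).2
  have himage_card {z : Fin m → X} (hz : StrictMono z) :
      (Finset.univ.image (Subtype.val ∘ z)).card = m := by
    simp [Finset.card_image_of_injective _ (Subtype.val_injective.comp hz.injective)]
  refine ⟨X, hXu, fun p z w hz hw => ?_⟩
  have h := Set.ext_iff.1 (hX _ _ (himage_sub z) (himage_sub w) (himage_card hz) (himage_card hw)) p
  simp only [Set.mem_ofPred_eq, nth_image_univ (show StrictMono (Subtype.val ∘ z) from hz),
    nth_image_univ (show StrictMono (Subtype.val ∘ w) from hw)] at h
  exact h

theorem exists_forall_sameOrder [Finite ι] (hR : IsRamseyU u) (Q : (ι → ℕ) → Prop) :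
    ∃ X ∈ u, ∀ s t : ι → X, SameOrder s t → (Q (Subtype.val ∘ s) ↔ Q (Subtype.val ∘ t)) := by
  choose X hXu hX using hR.exists_forall_comp_iff Q
  refine ⟨⋂ m ∈ Set.Iic (Nat.card ι), X m,
    (Filter.biInter_mem (Set.finite_Iic _)).2 fun m _ => hXu m, fun s t h => ?_⟩
  obtain ⟨m, hm, p, z, w, rfl, rfl⟩ := h.exists_eq_orderEmbedding_comp
  have hsub := Set.biInter_subset_of_mem (t := X) (Set.mem_Iic.2 hm)
  exact hX m p (Set.inclusion hsub ∘ z) (Set.inclusion hsub ∘ w) z.strictMono w.strictMono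

theorem exists_isCanonical [LinearOrder ι] [Finite ι] (hR : IsRamseyU u) (f : (ι → ℕ) → κ) :
    ∃ X ∈ u, ∃ I, IsCanonical (fun a : ι → X => f (Subtype.val ∘ a)) I := by
  obtain ⟨X, hXu, hX⟩ := hR.exists_forall_sameOrder
    fun s : ι ⊕ ι → ℕ => f (s ∘ Sum.inl) = f (s ∘ Sum.inr)
  have := (hR.1.infinite_of_mem hXu).to_subtype
  have hker : HasOrderInvariantKer fun a : ι → X => f (Subtype.val ∘ a) :=
    fun a b c d h => (hX _ _ h).1
  exact ⟨X, hXu, hker.exists_isCanonical (Nat.Subtype.orderIsoOfNat X)⟩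

theorem exists_canon (hR : IsRamseyU u) {n : ℕ} {P : Set (Set (Finset ℕ))}
    (hP : IsPartitionOn (cube n) P) : ∃ X ∈ u, Canon n P X := by
  obtain ⟨X, hXu, I, hI⟩ :=
    hR.exists_isCanonical fun a : Fin n → ℕ => {s | EquivP P (Finset.univ.image a) s}
  exact ⟨X, hXu, canon_of_isCanonical hP hI⟩

end IsRamseyU

/-- a nonprincipal ultrafilter `u` on `ℕ` is Ramsey iff for every `n ≥ 1`
and every (not necessarily finite) partition `P` of `[ω]^n`, `u` contains a set canonical
for `P`. -/
theorem stmt_16 (u : Ultrafilter ℕ) (hu : Nonprincipal u) :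
    IsRamseyU u ↔
      ∀ n : ℕ, 1 ≤ n → ∀ P : Set (Set (Finset ℕ)), IsPartitionOn (cube n) P →
        ∃ X ∈ u, Canon n P X := by
  refine ⟨fun hR n _ P hP => hR.exists_canon hP, fun h => ⟨hu, fun n hn P hP hfin => ?_⟩⟩
  obtain ⟨X, hXu, hX⟩ := h n hn P hP
  exact ⟨X, hXu, hX.homog hP hfin (hu.infinite_of_mem hXu)⟩
end
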